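/- arXiv:1011.1395 — 2 statements merged into one kernel-verified Lean document; each statement's English description precedes it below -/
import Mathlib

section
/- Let p be an odd prime, let q ≥ 1 be an integer not divisible by p, let N ≥ 1 be an integer, and set θ = p^N ∈ ℚ_p. Let x₁ ≠ x₂ be two distinct roots in ℚ_p of x² + (2θ − θ² + 2q − 1)x + q² = 0. Then, for the map f(x) = ((θx + q)/(x + θ + q − 1))², all three fixed points are neutral: ‖deriv f 1‖_p = 1, ‖deriv f x₁‖_p = 1, and ‖deriv f x₂‖_p = 1. -/
theorem aux_add {p : ℕ} [Fact p.Prime] {a b : ℚ_[p]} (ha : ‖a‖ < 1) (hb : ‖b‖ = 1) :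
    ‖a + b‖ = 1 := by
  rw [Padic.add_eq_max_of_ne (by rw [hb]; exact ha.ne), hb]
  exact max_eq_right ha.le

theorem aux_deriv {p : ℕ} [Fact p.Prime] (θ q x : ℚ_[p]) (h2 : ‖(2 : ℚ_[p])‖ = 1)
    (hθ : ‖θ‖ < 1) (hq : ‖q‖ = 1) (hx : ‖x‖ = 1) (hD : ‖x + θ + q - 1‖ = 1) :
    ‖deriv (fun x => ((θ * x + q) / (x + θ + q - 1)) ^ 2) x‖ = 1 := by
  have hD0 : x + θ + q - 1 ≠ 0 := by
    intro h; rw [h] at hD; simp at hD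
  have hn : HasDerivAt (fun x : ℚ_[p] => θ * x + q) θ x := by
    simpa using ((hasDerivAt_id x).const_mul θ).add_const q
  have hd : HasDerivAt (fun x : ℚ_[p] => x + θ + q - 1) 1 x :=
    (((hasDerivAt_id x).add_const θ).add_const q).sub_const 1
  have h := ((hn.fun_div hd hD0).fun_pow 2).deriv
  have e : deriv (fun x => ((θ * x + q) / (x + θ + q - 1)) ^ 2) x
      = 2 * (θ * x + q) * (θ + -1) * (θ + q) / (x + θ + q - 1) ^ 3 := by
    rw [h]; simp only [show 2 - 1 = 1 from rfl, pow_one]; push_cast; field_simp; ring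
  rw [e]
  have a1 : ‖θ * x + q‖ = 1 := aux_add (by rw [norm_mul, hx, mul_one]; exact hθ) hq
  have a2 : ‖θ + -1‖ = 1 := aux_add hθ (by simp)
  have a3 : ‖θ + q‖ = 1 := aux_add hθ hq
  simp only [norm_div, norm_mul, norm_pow, h2, a1, a2, a3, hD]
  norm_num

theorem aux_root {p : ℕ} [Fact p.Prime] (θ q x : ℚ_[p]) (h2 : ‖(2 : ℚ_[p])‖ = 1)
    (hθ : ‖θ‖ < 1) (hq : ‖q‖ = 1)
    (h : x ^ 2 + (2 * θ - θ ^ 2 + 2 * q - 1) * x + q ^ 2 = 0) :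
    ‖deriv (fun x => ((θ * x + q) / (x + θ + q - 1)) ^ 2) x‖ = 1 := by
  have hb : ‖2 * θ - θ ^ 2 + 2 * q - 1‖ ≤ 1 := by
    let t : ℤ_[p] := ⟨θ, hθ.le⟩
    let s : ℤ_[p] := ⟨q, hq.le⟩
    have := (2 * t - t ^ 2 + 2 * s - 1).2
    exact this
  generalize hB : 2 * θ - θ ^ 2 + 2 * q - 1 = b at h hb
  have hx : ‖x‖ = 1 := by
    have e1 : x * (x + b) = - q ^ 2 := by linear_combination h
    have e2 := congrArg norm e1
    rw [norm_mul, norm_neg, norm_pow, hq, one_pow] at e2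
    rcases lt_trichotomy ‖x‖ 1 with hl | hl | hl
    · have : ‖x + b‖ ≤ 1 := (Padic.nonarchimedean x b).trans (max_le hl.le hb)
      nlinarith [norm_nonneg x, norm_nonneg (x + b)]
    · exact hl
    · have : ‖x + b‖ = ‖x‖ := by
        rw [Padic.add_eq_max_of_ne (by linarith [hb] |> fun h : ‖b‖ < ‖x‖ => h.ne')]
        exact max_eq_left (by linarith)
      rw [this] at e2; nlinarith
  refine aux_deriv θ q x h2 hθ hq hx ?_
  have a1 : ‖θ * x + q‖ = 1 := aux_add (by rw [norm_mul, hx, mul_one]; exact hθ) hq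
  have e : x * (x + θ + q - 1) ^ 2 = (θ * x + q) ^ 2 := by
    subst hB
    linear_combination (x - 1) * h
  have e2 := congrArg norm e
  rw [norm_mul, norm_pow, norm_pow, hx, a1, one_mul, one_pow] at e2
  exact (pow_eq_one_iff_of_nonneg (norm_nonneg _) two_ne_zero).1 e2

theorem stmt_9 (p : ℕ) [Fact p.Prime] (hp2 : p ≠ 2)
    (q : ℕ) (hq : 1 ≤ q) (hpq : ¬ p ∣ q)
    (N : ℕ) (hN : 1 ≤ N) (θ : ℚ_[p]) (hθ : θ = (p : ℚ_[p]) ^ N)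
    (x₁ x₂ : ℚ_[p]) (hx : x₁ ≠ x₂)
    (h₁ : x₁ ^ 2 + (2 * θ - θ ^ 2 + 2 * q - 1) * x₁ + q ^ 2 = 0)
    (h₂ : x₂ ^ 2 + (2 * θ - θ ^ 2 + 2 * q - 1) * x₂ + q ^ 2 = 0)
    (f : ℚ_[p] → ℚ_[p])
    (hf : f = fun x => ((θ * x + q) / (x + θ + q - 1)) ^ 2) :
    ‖deriv f 1‖ = 1 ∧ ‖deriv f x₁‖ = 1 ∧ ‖deriv f x₂‖ = 1 := by
  have hpp : p.Prime := Fact.out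
  have key : ∀ n : ℕ, ¬ p ∣ n → ‖(n : ℚ_[p])‖ = 1 := by
    intro n hn
    refine le_antisymm (by simpa using Padic.norm_int_le_one (p := p) (n : ℤ)) ?_
    by_contra hlt
    push Not at hlt
    have := (Padic.norm_natCast_lt_one_iff (p := p) (n := n)).1 hlt
    exact hn this
  have h2 : ‖(2 : ℚ_[p])‖ = 1 := by
    have := key 2 (fun h => hp2 ((Nat.prime_dvd_prime_iff_eq hpp Nat.prime_two).1 h))
    simpa using this
  have hq1 := key q hpq
  have ht : ‖θ‖ < 1 := by
    rw [hθ, norm_pow]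
    exact pow_lt_one₀ (norm_nonneg _) Padic.norm_p_lt_one (by omega)
  subst hf
  refine ⟨aux_deriv θ q 1 h2 ht hq1 (by simp) ?_, aux_root θ q x₁ h2 ht hq1 h₁,
    aux_root θ q x₂ h2 ht hq1 h₂⟩
  have : (1 : ℚ_[p]) + θ + q - 1 = θ + q := by ring
  rw [this]; exact aux_add ht hq1
end

section
/- Let p be an odd prime, let q ≥ 1 be an integer, let M ≥ 1 be an integer, and set θ = p^{−M} ∈ ℚ_p, so ‖θ‖_p = p^M > 1. Let x₁ ≠ x₂ be two distinct roots in ℚ_p of x² + (2θ − θ² + 2q − 1)x + q² = 0, labelled so that ‖x₁‖_p ≥ ‖x₂‖_p. Then: ‖x₁‖_p = ‖θ‖_p², ‖x₂‖_p = (‖q‖_p/‖θ‖_p)², ‖θx₁ + q‖_p = ‖θ‖_p³, ‖x₁ + θ + q − 1‖_p = ‖θ‖_p², ‖θx₂ + q‖_p = ‖q‖_p, and ‖x₂ + θ + q − 1‖_p = ‖θ‖_p. -/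
theorem aux_dom {p : ℕ} [Fact p.Prime] (a b : ℚ_[p]) (h : ‖b‖ < ‖a‖) : ‖a + b‖ = ‖a‖ := by
  rw [Padic.add_eq_max_of_ne h.ne', max_eq_left h.le]

theorem stmt_13 (p : ℕ) [Fact p.Prime] (hp2 : p ≠ 2)
    (q : ℕ) (hq : 1 ≤ q) (M : ℕ) (hM : 1 ≤ M)
    (θ : ℚ_[p]) (hθ : θ = ((p : ℚ_[p]) ^ M)⁻¹)
    (x₁ x₂ : ℚ_[p]) (hx : x₁ ≠ x₂)
    (h₁ : x₁ ^ 2 + (2 * θ - θ ^ 2 + 2 * q - 1) * x₁ + q ^ 2 = 0)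
    (h₂ : x₂ ^ 2 + (2 * θ - θ ^ 2 + 2 * q - 1) * x₂ + q ^ 2 = 0)
    (hord : ‖x₂‖ ≤ ‖x₁‖) :
    ‖x₁‖ = ‖θ‖ ^ 2 ∧ ‖x₂‖ = (‖(q : ℚ_[p])‖ / ‖θ‖) ^ 2 ∧
    ‖θ * x₁ + q‖ = ‖θ‖ ^ 3 ∧ ‖x₁ + θ + q - 1‖ = ‖θ‖ ^ 2 ∧
    ‖θ * x₂ + q‖ = ‖(q : ℚ_[p])‖ ∧ ‖x₂ + θ + q - 1‖ = ‖θ‖ := by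
  have ht : 1 < ‖θ‖ := by
    have hp1 : (1:ℝ) < p := by exact_mod_cast (Fact.out : p.Prime).one_lt
    rw [hθ, norm_inv, norm_pow, Padic.norm_p, inv_pow, inv_inv]
    exact one_lt_pow₀ hp1 (by omega)
  have hq0 : 0 < ‖(q : ℚ_[p])‖ := by
    rw [norm_pos_iff]; exact_mod_cast (by omega : q ≠ 0)
  have hint : ∀ z : ℤ, ‖(z : ℚ_[p])‖ ≤ 1 := Padic.norm_int_le_one
  have hq1 : ‖(q : ℚ_[p])‖ ≤ 1 := by simpa using hint q
  have hqm : ‖(q : ℚ_[p]) - 1‖ ≤ 1 := by simpa using hint ((q : ℤ) - 1)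
  have hc : ‖(1 : ℚ_[p]) - 2 * q‖ ≤ 1 := by simpa using hint (1 - 2 * (q : ℤ))
  have h2 : ‖(2 : ℚ_[p])‖ ≤ 1 := by simpa using hint 2
  have hsum : x₁ + x₂ = θ ^ 2 + (-(2 * θ) + (1 - 2 * q)) := by
    apply mul_left_cancel₀ (sub_ne_zero.mpr hx)
    linear_combination h₁ - h₂
  have hprod : x₁ * x₂ = (q : ℚ_[p]) ^ 2 := by
    linear_combination x₁ * hsum - h₁
  have ht2 : ‖θ‖ < ‖θ‖ ^ 2 := by nlinarith
  have hS : ‖x₁ + x₂‖ = ‖θ‖ ^ 2 := by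
    rw [hsum, aux_dom, norm_pow]
    rw [norm_pow]
    refine lt_of_le_of_lt (Padic.nonarchimedean _ _) (max_lt ?_ (by linarith))
    rw [norm_neg, norm_mul]
    nlinarith
  have hn := congrArg norm hprod
  rw [norm_mul, norm_pow] at hn
  have hx1 : ‖x₁‖ = ‖θ‖ ^ 2 := by
    have hlt : ‖x₂‖ < ‖x₁ + x₂‖ := by
      rw [hS]
      by_contra! hcon
      have : 1 < ‖x₂‖ := by linarith
      nlinarith
    have := aux_dom (x₁ + x₂) (-x₂) (by rwa [norm_neg])
    rw [add_neg_cancel_right] at this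
    rw [this, hS]
  have hx2 : ‖x₂‖ = (‖(q : ℚ_[p])‖ / ‖θ‖) ^ 2 := by
    rw [div_pow, eq_div_iff (by positivity), ← hn, hx1, mul_comm]
  have hx2' : ‖θ‖ * ‖x₂‖ < ‖(q : ℚ_[p])‖ := by
    have e : ‖θ‖ * (‖θ‖ * ‖x₂‖) = ‖(q : ℚ_[p])‖ ^ 2 := by rw [← hn, hx1]; ring
    by_contra! hcon
    nlinarith
  refine ⟨hx1, hx2, ?_, ?_, ?_, ?_⟩
  · have e : ‖θ * x₁‖ = ‖θ‖ ^ 3 := by rw [norm_mul, hx1]; ring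
    rw [aux_dom, e]
    rw [e]
    exact lt_of_le_of_lt hq1 (one_lt_pow₀ ht (by norm_num))
  · rw [add_sub_assoc, add_assoc, aux_dom, hx1]
    rw [hx1, aux_dom _ _ (by linarith)]
    exact ht2
  · rw [add_comm, aux_dom]
    rwa [norm_mul]
  · rw [add_sub_assoc, add_comm x₂, add_assoc, aux_dom]
    refine lt_of_le_of_lt (Padic.nonarchimedean _ _) (max_lt ?_ (by linarith))
    nlinarith [norm_nonneg x₂]
end
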